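/- arXiv:1605.00818 — 3 statements merged into one kernel-verified Lean document; each statement's English description precedes it below -/
import Mathlib

section
/- Let k ≥ 3, v = 2k+1, and let F be a graph that is a vertex-disjoint union of two cycles of length k with vertices in (Z_k × Z_2) ∪ {∞} satisfying: (i) V(F) = ((Z_k × Z_2) ∪ {∞}) \ {(a,b)} for some (a,b) ∈ Z_k × Z_2; (ii) ∞ has one neighbor in Z_k × {0} and its other neighbor in Z_k × {1}; (iii) Δ_{(0,0)}F ⊇ Z_k \ {0}, Δ_{(0,1)}F ⊇ Z_k, and Δ_{(1,1)}F ⊇ Z_k \ {0, d, −d}, where d is an integer with gcd(d, k) = 1. Then there exists a k-ARCS(2k+1). -/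
open SimpleGraph

/-- `F` is a `C_k`-factor of `H`: a spanning subgraph of `H` that is 2-regular
and each of whose connected components has exactly `k` vertices. -/
def IsCycleFactor {V : Type*} (H F : SimpleGraph V) (k : ℕ) : Prop :=
  F ≤ H ∧ (∀ v, (F.neighborSet v).ncard = 2) ∧
    ∀ v : V, {w | F.Reachable v w}.ncard = k

/-- The family of graphs `F` partitions the edge set of `H`. -/
def IsDecomp {V ι : Type*} (H : SimpleGraph V) (F : ι → SimpleGraph V) : Prop :=
  (Pairwise fun i j => Disjoint (F i).edgeSet (F j).edgeSet) ∧
  ∀ e, e ∈ H.edgeSet ↔ ∃ i, e ∈ (F i).edgeSet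

/-- `HW H m n α β`: the edge set of `H` can be partitioned into
`α` `C_m`-factors and `β` `C_n`-factors. -/
def HW {V : Type*} (H : SimpleGraph V) (m n α β : ℕ) : Prop :=
  ∃ F : Fin α ⊕ Fin β → SimpleGraph V,
    (∀ i, IsCycleFactor H (F (Sum.inl i)) m) ∧
    (∀ j, IsCycleFactor H (F (Sum.inr j)) n) ∧
    IsDecomp H F

/-- `(α, β) ∈ HWP(v; m, n)` for odd `v`: `K_v` has a 2-factorization into
`α` `C_m`-factors and `β` `C_n`-factors. -/
def HWPodd (v m n α β : ℕ) : Prop := HW (⊤ : SimpleGraph (Fin v)) m n α β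

/-- `F ≤ H` is a vertex-disjoint union of `c` cycles of length `k`:
2-regular on its support, every component has `k` vertices, and the support
has `k * c` vertices. -/
def IsCycleClass {V : Type*} (H F : SimpleGraph V) (k c : ℕ) : Prop :=
  F ≤ H ∧ (∀ v ∈ F.support, (F.neighborSet v).ncard = 2) ∧
  (∀ v ∈ F.support, {w | F.Reachable v w}.ncard = k) ∧
  F.support.ncard = k * c

/-- An almost resolvable `k`-cycle system of order `v`: a partition of the
edges of `K_v` into `(v-1)/2` almost parallel classes (each a vertex-disjoint
union of `(v-1)/k` `k`-cycles) together with one half-parallel class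
(a vertex-disjoint union of `(v-1)/(2k)` `k`-cycles). -/
def IsARCS (k v : ℕ) : Prop :=
  ∃ F : Fin ((v - 1) / 2) ⊕ Unit → SimpleGraph (Fin v),
    (∀ i, IsCycleClass ⊤ (F (Sum.inl i)) k ((v - 1) / k)) ∧
    (∀ j, IsCycleClass ⊤ (F (Sum.inr j)) k ((v - 1) / (2 * k))) ∧
    IsDecomp (⊤ : SimpleGraph (Fin v)) F

/-- The lexicographic product `C_m[n]` of the cycle `C_m` with the empty graph
on `n` vertices, on vertex set `ZMod m × ZMod n`. -/
def lexCycle (m n : ℕ) : SimpleGraph (ZMod m × ZMod n) :=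
  SimpleGraph.fromRel (fun a b => a.1 - b.1 = 1)

/-- The Cayley graph of an additive group with connection set `S`. -/
def cayley {Γ : Type*} [AddGroup Γ] (S : Set Γ) : SimpleGraph Γ :=
  SimpleGraph.fromRel (fun a b => a - b ∈ S)

lemma aux_class_comap {V W : Type*} (e : W ≃ V) (G : SimpleGraph V) (k c : ℕ)
    (h : IsCycleClass ⊤ G k c) : IsCycleClass ⊤ (G.comap e) k c := by
  obtain ⟨-, h2, h3, h4⟩ := h
  have hs : (G.comap e).support = e ⁻¹' G.support := by
    ext w
    simp only [SimpleGraph.mem_support, Set.mem_preimage, SimpleGraph.comap_adj]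
    constructor
    · rintro ⟨x, hx⟩; exact ⟨_, hx⟩
    · rintro ⟨x, hx⟩; exact ⟨e.symm x, by simpa using hx⟩
  have key : ∀ S : Set V, (e ⁻¹' S).ncard = S.ncard := fun S =>
    Set.ncard_preimage_of_injective_subset_range e.injective (by simp)
  refine ⟨le_top, ?_, ?_, ?_⟩
  · intro w hw
    rw [hs] at hw
    rw [← h2 _ hw, ← key]
    rfl
  · intro w hw
    rw [hs] at hw
    rw [← h3 _ hw, ← key]
    congr 1
    ext x
    exact (SimpleGraph.Iso.reachable_iff (φ := SimpleGraph.Iso.comap e G) (u := w) (v := x)).symm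
  · rw [hs, key, h4]

open Classical in
lemma aux_darts {V : Type*} [Fintype V] (G : SimpleGraph V) (k c : ℕ)
    (h : IsCycleClass ⊤ G k c) :
    (Finset.univ.filter (fun p : V × V => G.Adj p.1 p.2)).card = 2 * (k * c) := by
  obtain ⟨-, h2, h3, h4⟩ := h
  rw [Finset.card_filter, Fintype.sum_prod_type, ← h4]
  have : ∀ u : V, (∑ w : V, if G.Adj u w then 1 else 0) = if u ∈ G.support then 2 else 0 := by
    intro u
    rw [← Finset.card_filter]
    have e1 : (Finset.univ.filter (fun w => G.Adj u w)).card = (G.neighborSet u).ncard := by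
      rw [← Set.ncard_coe_finset]; congr 1; ext; simp
    rw [e1]
    split_ifs with hu
    · exact h2 u hu
    · rw [Set.ncard_eq_zero]
      ext w
      simp only [SimpleGraph.mem_neighborSet, Set.mem_empty_iff_false, iff_false]
      intro hw
      exact hu ⟨w, hw⟩
  simp only [this]
  rw [← Finset.sum_filter, Finset.sum_const, smul_eq_mul, mul_comm]
  congr 1
  rw [← Set.ncard_coe_finset]; congr 1; ext; simp

open Classical in
lemma aux_decomp {V ι : Type*} [Fintype V] [Fintype ι] (F : ι → SimpleGraph V)
    (k : ℕ) (c : ι → ℕ) (h : ∀ i, IsCycleClass ⊤ (F i) k (c i))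
    (hc : ∑ i, 2 * (k * c i) = Fintype.card V * Fintype.card V - Fintype.card V)
    (hcov : ∀ u w, u ≠ w → ∃ i, (F i).Adj u w) :
    IsDecomp (⊤ : SimpleGraph V) F := by
  have h1 : ∑ p ∈ (Finset.univ : Finset V).offDiag, 1 =
      ∑ p ∈ (Finset.univ : Finset V).offDiag,
        (Finset.univ.filter (fun i => (F i).Adj p.1 p.2)).card := by
    rw [Finset.sum_const, Finset.offDiag_card, smul_eq_mul, mul_one, Finset.card_univ, ← hc]
    simp only [Finset.card_filter]
    rw [Finset.sum_comm]
    refine Finset.sum_congr rfl fun i _ => ?_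
    rw [← aux_darts (F i) k (c i) (h i), ← Finset.card_filter]
    congr 1
    ext p
    simp only [Finset.mem_filter, Finset.mem_univ, true_and, Finset.mem_offDiag]
    exact ⟨fun hp => ⟨hp.ne, hp⟩, fun hp => hp.2⟩
  rw [Finset.sum_eq_sum_iff_of_le] at h1
  · constructor
    · intro i j hij
      rw [Set.disjoint_left]
      intro e
      induction e using Sym2.ind with
      | _ u w =>
        intro hi hj
        rw [SimpleGraph.mem_edgeSet] at hi hj
        have := h1 (u, w) (by simp [hi.ne])
        obtain ⟨a, ha⟩ := Finset.card_eq_one.mp this.symm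
        have a1 : i ∈ ({a} : Finset ι) := by rw [← ha]; simpa using hi
        have a2 : j ∈ ({a} : Finset ι) := by rw [← ha]; simpa using hj
        rw [Finset.mem_singleton] at a1 a2
        exact hij (a1.trans a2.symm)
    · intro e
      induction e using Sym2.ind with
      | _ u w =>
        simp only [SimpleGraph.mem_edgeSet, SimpleGraph.top_adj]
        exact ⟨hcov u w, fun ⟨i, hi⟩ => hi.ne⟩
  · intro p hp
    obtain ⟨i, hi⟩ := hcov p.1 p.2 (by simpa using hp)
    exact Finset.card_pos.mpr ⟨i, by simpa using hi⟩

def auxC (k : ℕ) (d : ZMod k) (hd : d ≠ 0) : SimpleGraph (Option (ZMod k × ZMod 2)) where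
  Adj u w := ∃ x y, u = some (x, 1) ∧ w = some (y, 1) ∧ (x - y = d ∨ x - y = -d)
  symm := ⟨by
    rintro u w ⟨x, y, rfl, rfl, h⟩
    refine ⟨y, x, rfl, rfl, ?_⟩
    rcases h with h | h
    · right; rw [← h]; ring
    · left; rw [← neg_sub, h]; ring⟩
  loopless := ⟨by
    rintro u ⟨x, y, h, h', h2⟩
    have : x = y := by rw [h] at h'; simpa using h'
    subst this
    simp at h2
    rcases h2 with h2 | h2
    · exact hd h2.symm
    · exact hd (by simpa using h2)⟩

lemma auxC_class (k : ℕ) (hk : 3 ≤ k) (d : ZMod k) (hd : d ≠ 0) (hu : IsUnit d) :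
    IsCycleClass ⊤ (auxC k d hd) k 1 := by
  have hN : ∀ x, (auxC k d hd).neighborSet (some (x, 1)) = {some (x - d, 1), some (x + d, 1)} := by
    intro x
    ext w
    simp only [SimpleGraph.mem_neighborSet, Set.mem_insert_iff, Set.mem_singleton_iff]
    constructor
    · rintro ⟨x', y, h, rfl, h2⟩
      have : x = x' := by simpa using h
      subst this
      rcases h2 with h2 | h2
      · left; rw [← h2]; simp
      · right; rw [← neg_eq_iff_eq_neg] at h2; rw [← h2]; simp
    · rintro (rfl | rfl)
      · exact ⟨x, _, rfl, rfl, by simp⟩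
      · exact ⟨x, _, rfl, rfl, by simp⟩
  have hS : (auxC k d hd).support = Set.range (fun x : ZMod k => some (x, (1 : ZMod 2))) := by
    ext w
    constructor
    · rintro ⟨w', x, y, rfl, rfl, h⟩
      exact ⟨x, rfl⟩
    · rintro ⟨x, rfl⟩
      exact ⟨some (x - d, 1), x, _, rfl, rfl, by simp⟩
  have hcard : (Set.range (fun x : ZMod k => some (x, (1 : ZMod 2)))).ncard = k := by
    rw [← Set.image_univ, Set.ncard_image_of_injective _ (by intro a b h; simpa using h),
      Set.ncard_univ, Nat.card_zmod]
  refine ⟨le_top, ?_, ?_, ?_⟩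
  · rw [hS]
    rintro _ ⟨x, rfl⟩
    rw [hN, Set.ncard_pair]
    intro h
    have h : x - d = x + d := by simpa using h
    have h2 : d * 2 = 0 := by linear_combination -h
    rw [hu.mul_right_eq_zero] at h2
    have : ((2 : ℕ) : ZMod k) = 0 := by exact_mod_cast h2
    rw [ZMod.natCast_eq_zero_iff] at this
    exact absurd (Nat.le_of_dvd (by norm_num) this) (by omega)
  · rw [hS]
    rintro _ ⟨x, rfl⟩
    refine Eq.trans (congrArg Set.ncard ?_) hcard
    ext w
    constructor
    · rintro ⟨p⟩
      rw [← hS]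
      have : ∀ u w, (auxC k d hd).Walk u w → u ∈ (auxC k d hd).support →
          w ∈ (auxC k d hd).support := by
        intro u w p
        induction p with
        | nil => exact id
        | cons h p ih => exact fun _ => ih ⟨_, h.symm⟩
      exact this _ _ p (by rw [hS]; exact ⟨x, rfl⟩)
    · rintro ⟨y, rfl⟩
      haveI : NeZero k := ⟨by omega⟩
      have step : ∀ n : ℕ, (auxC k d hd).Reachable (some (x, 1)) (some (x + n * d, 1)) := by
        intro n
        induction n with
        | zero => simp
        | succ n ih =>
          refine ih.trans (SimpleGraph.Adj.reachable ⟨_, _, rfl, rfl, ?_⟩)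
          right; push_cast; ring
      obtain ⟨u, rfl⟩ := hu
      have := step (((y - x) * (↑u⁻¹ : ZMod k)).val)
      rw [ZMod.natCast_zmod_val, mul_assoc, Units.inv_mul, mul_one, add_sub_cancel] at this
      exact this
  · rw [hS, hcard, mul_one]

def auxT (k : ℕ) (i : ZMod k) : Option (ZMod k × ZMod 2) ≃ Option (ZMod k × ZMod 2) :=
  Equiv.optionCongr ((Equiv.addRight i).prodCongr (Equiv.refl _))

lemma auxT_none (k : ℕ) (i : ZMod k) : auxT k i none = none := rfl

lemma auxT_some (k : ℕ) (i x : ZMod k) (b) : auxT k i (some (x, b)) = some (x + i, b) := rfl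

theorem stmt3 (k : ℕ) (hk : 3 ≤ k) (d : ℤ) (hd : Int.gcd d k = 1)
    (F : SimpleGraph (Option (ZMod k × ZMod 2)))
    (hF : (∀ v ∈ F.support, (F.neighborSet v).ncard = 2) ∧
      (∀ v ∈ F.support, {w | F.Reachable v w}.ncard = k) ∧
      F.support.ncard = 2 * k)
    (hi : ∃ (a : ZMod k) (b : ZMod 2), F.support = {x | x ≠ some (a, b)})
    (hii : ∃ x y : ZMod k, F.Adj none (some (x, 0)) ∧ F.Adj none (some (y, 1)))
    (hiii00 : ∀ z : ZMod k, z ≠ 0 →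
      ∃ x y : ZMod k, F.Adj (some (x, 0)) (some (y, 0)) ∧ x - y = z)
    (hiii01 : ∀ z : ZMod k,
      ∃ x y : ZMod k, F.Adj (some (x, 0)) (some (y, 1)) ∧ x - y = z)
    (hiii11 : ∀ z : ZMod k, z ≠ 0 → z ≠ (d : ZMod k) → z ≠ -(d : ZMod k) →
      ∃ x y : ZMod k, F.Adj (some (x, 1)) (some (y, 1)) ∧ x - y = z) :
    IsARCS k (2 * k + 1) := by
  haveI : NeZero k := ⟨by omega⟩
  haveI : Fact (1 < k) := ⟨by omega⟩
  have hu : IsUnit (d : ZMod k) := by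
    rw [← Int.isCoprime_iff_gcd_eq_one] at hd
    obtain ⟨a, b, hab⟩ := hd
    have := congrArg (Int.cast : ℤ → ZMod k) hab
    push_cast at this
    rw [ZMod.natCast_self, mul_zero, add_zero] at this
    exact IsUnit.of_mul_eq_one_right _ this
  have hd0 : (d : ZMod k) ≠ 0 := hu.ne_zero
  have e1 : (2 * k + 1 - 1) / 2 = k := by omega
  have e2 : (2 * k + 1 - 1) / k = 2 := by
    rw [Nat.add_sub_cancel]; exact Nat.mul_div_cancel _ (by omega)
  have e3 : (2 * k + 1 - 1) / (2 * k) = 1 := by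
    rw [Nat.add_sub_cancel]; exact Nat.div_self (by omega)
  unfold IsARCS
  rw [e1, e2, e3]
  have σ : Fin k ≃ ZMod k := Fintype.equivOfCardEq (by simp [ZMod.card])
  have e : Fin (2 * k + 1) ≃ Option (ZMod k × ZMod 2) :=
    Fintype.equivOfCardEq (by simp [ZMod.card]; ring)
  have hFc : IsCycleClass ⊤ F k 2 := ⟨le_top, hF.1, hF.2.1, by rw [hF.2.2, mul_comm]⟩
  have hC := auxC_class k hk d hd0 hu
  let H : Fin k ⊕ Unit → SimpleGraph (Fin (2 * k + 1)) := fun j =>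
    Sum.elim (fun i => F.comap (e.trans (auxT k (σ i)))) (fun _ => (auxC k d hd0).comap e) j
  have H1 : ∀ i, IsCycleClass ⊤ (H (Sum.inl i)) k 2 := fun i => aux_class_comap _ F k 2 hFc
  have H2 : ∀ i, IsCycleClass ⊤ (H (Sum.inr i)) k 1 := fun i => aux_class_comap _ _ k 1 hC
  refine ⟨H, H1, H2, aux_decomp H k (Sum.elim (fun _ => 2) (fun _ => 1)) ?_ ?_ ?_⟩
  · rintro (i | i)
    · exact H1 i
    · exact H2 i
  · simp
    rw [eq_comm, Nat.sub_eq_iff_eq_add (by nlinarith)]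
    ring
  · have cov : ∀ u w : Option (ZMod k × ZMod 2), u ≠ w →
        (∃ i, F.Adj (auxT k i u) (auxT k i w)) ∨ (auxC k d hd0).Adj u w := by
      have two : ∀ b : ZMod 2, b = 0 ∨ b = 1 := by decide
      have lift : ∀ (z z' x y : ZMod k) (b c : ZMod 2), F.Adj (some (x, b)) (some (y, c)) →
          x - y = z - z' → ∃ i, F.Adj (auxT k i (some (z, b))) (auxT k i (some (z', c))) := by
        intro z z' x y b c h hxy
        refine ⟨x - z, ?_⟩
        rw [auxT_some, auxT_some]
        convert h using 3
        · ring
        · linear_combination hxy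
      have infc : ∀ (z : ZMod k) (b : ZMod 2),
          ∃ i, F.Adj (auxT k i none) (auxT k i (some (z, b))) := by
        intro z b
        obtain ⟨x, y, hx, hy⟩ := hii
        rcases two b with rfl | rfl
        · refine ⟨x - z, ?_⟩
          rw [auxT_none, auxT_some]; convert hx using 3; ring
        · refine ⟨y - z, ?_⟩
          rw [auxT_none, auxT_some]; convert hy using 3; ring
      rintro (_ | ⟨z, b⟩) (_ | ⟨z', c⟩) hne
      · exact absurd rfl hne
      · exact Or.inl (infc z' c)
      · obtain ⟨i, hi⟩ := infc z b
        exact Or.inl ⟨i, hi.symm⟩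
      · rcases two b with rfl | rfl <;> rcases two c with rfl | rfl
        · have hz : z - z' ≠ 0 := fun h => hne (by rw [sub_eq_zero.mp h])
          obtain ⟨x, y, h, hxy⟩ := hiii00 _ hz
          exact Or.inl (lift z z' x y 0 0 h hxy)
        · obtain ⟨x, y, h, hxy⟩ := hiii01 (z - z')
          exact Or.inl (lift z z' x y 0 1 h hxy)
        · obtain ⟨x, y, h, hxy⟩ := hiii01 (z' - z)
          obtain ⟨i, hi⟩ := lift z' z x y 0 1 h hxy
          exact Or.inl ⟨i, hi.symm⟩
        · have hz : z - z' ≠ 0 := fun h => hne (by rw [sub_eq_zero.mp h])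
          by_cases h1 : z - z' = d
          · exact Or.inr ⟨z, z', rfl, rfl, Or.inl h1⟩
          by_cases h2 : z - z' = -d
          · exact Or.inr ⟨z, z', rfl, rfl, Or.inr h2⟩
          obtain ⟨x, y, h, hxy⟩ := hiii11 _ hz h1 h2
          exact Or.inl (lift z z' x y 1 1 h hxy)
    intro u w huw
    rcases cov (e u) (e w) (fun h => huw (e.injective h)) with ⟨i, hi⟩ | h
    · refine ⟨Sum.inl (σ.symm i), ?_⟩
      change F.Adj (auxT k (σ (σ.symm i)) (e u)) (auxT k (σ (σ.symm i)) (e w))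
      rw [Equiv.apply_symm_apply]
      exact hi
    · exact ⟨Sum.inr (), h⟩
end

section
/- For every odd integer k ≥ 9, there exists a k-ARCS(2k+1), i.e. an almost resolvable k-cycle system of order 2k+1. -/
open SimpleGraph

/-! ### Graphs from families of cycles -/

/-- The union of the cycles `i ↦ f (t, i)`. -/
def cycG {W ι : Type*} {k : ℕ} (f : ι × ZMod k → W) : SimpleGraph W :=
  SimpleGraph.fromRel (fun a b => ∃ t i, a = f (t, i) ∧ b = f (t, i + 1))

lemma zmod_one_ne {k : ℕ} (hk : 3 ≤ k) (i : ZMod k) : i + 1 ≠ i := by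
  have : Fact (1 < k) := ⟨by omega⟩
  simp

lemma zmod_two_ne {k : ℕ} (hk : 3 ≤ k) (i : ZMod k) : i + 1 ≠ i - 1 := by
  intro h
  have h2 : ((2 : ℕ) : ZMod k) = 0 := by
    push_cast
    linear_combination h
  rw [ZMod.natCast_eq_zero_iff] at h2
  have := Nat.le_of_dvd (by norm_num) h2
  omega

lemma cycG_adj {W ι : Type*} {k : ℕ} (hk : 3 ≤ k) (f : ι × ZMod k → W)
    (hf : Function.Injective f) (t : ι) (i : ZMod k) (b : W) :
    (cycG f).Adj (f (t, i)) b ↔ b = f (t, i + 1) ∨ b = f (t, i - 1) := by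
  unfold cycG
  rw [SimpleGraph.fromRel_adj]
  constructor
  · rintro ⟨_, ⟨t', i', h1, h2⟩ | ⟨t', i', h1, h2⟩⟩
    · have := hf h1
      simp only [Prod.mk.injEq] at this
      obtain ⟨rfl, rfl⟩ := this
      exact Or.inl h2
    · have := hf h2
      simp only [Prod.mk.injEq] at this
      obtain ⟨rfl, rfl⟩ := this
      right
      rw [h1]; simp
  · rintro (rfl | rfl)
    · refine ⟨?_, Or.inl ⟨t, i, rfl, rfl⟩⟩
      intro h
      have := hf h
      simp only [Prod.mk.injEq] at this
      exact zmod_one_ne hk i this.2.symm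
    · refine ⟨?_, Or.inr ⟨t, i - 1, rfl, by simp⟩⟩
      intro h
      have := hf h
      simp only [Prod.mk.injEq] at this
      have h3 := zmod_one_ne hk (i - 1)
      apply h3
      rw [sub_add_cancel]; exact this.2

lemma cycG_class {W ι : Type*} [Fintype ι] {k : ℕ} (hk : 3 ≤ k) (f : ι × ZMod k → W)
    (hf : Function.Injective f) : IsCycleClass ⊤ (cycG f) k (Fintype.card ι) := by
  have : NeZero k := ⟨by omega⟩
  have hsupp : (cycG f).support = Set.range f := by
    ext w
    rw [SimpleGraph.mem_support]
    constructor
    · rintro ⟨b, hb⟩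
      unfold cycG at hb
      rw [SimpleGraph.fromRel_adj] at hb
      rcases hb with ⟨_, ⟨t', i', h1, h2⟩ | ⟨t', i', h1, h2⟩⟩
      · exact ⟨_, h1.symm⟩
      · exact ⟨_, h2.symm⟩
    · rintro ⟨⟨t, i⟩, rfl⟩
      exact ⟨f (t, i + 1), (cycG_adj hk f hf t i _).2 (Or.inl rfl)⟩
  refine ⟨le_top, ?_, ?_, ?_⟩
  · rw [hsupp]
    rintro _ ⟨⟨t, i⟩, rfl⟩
    have : (cycG f).neighborSet (f (t, i)) = {f (t, i + 1), f (t, i - 1)} := by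
      ext b
      rw [SimpleGraph.mem_neighborSet, cycG_adj hk f hf]
      simp
    rw [this, Set.ncard_pair]
    intro h
    have := hf h
    simp only [Prod.mk.injEq] at this
    exact zmod_two_ne hk i this.2
  · rw [hsupp]
    rintro _ ⟨⟨t, i⟩, rfl⟩
    have : {w | (cycG f).Reachable (f (t, i)) w} = Set.range (fun j => f (t, j)) := by
      ext w
      constructor
      · rintro ⟨p⟩
        have key : ∀ u v, (cycG f).Walk u v → u ∈ Set.range (fun j => f (t, j)) →
            v ∈ Set.range (fun j => f (t, j)) := by
          intro u v p
          induction p with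
          | nil => exact id
          | cons h p ih =>
            rintro ⟨j, rfl⟩
            apply ih
            rcases (cycG_adj hk f hf t j _).1 h with h | h
            · exact ⟨_, h.symm⟩
            · exact ⟨_, h.symm⟩
        exact key _ _ p ⟨i, rfl⟩
      · rintro ⟨j, rfl⟩
        have key : ∀ m : ℕ, (cycG f).Reachable (f (t, i)) (f (t, i + m)) := by
          intro m
          induction m with
          | zero => simp
          | succ m ih =>
            refine ih.trans (SimpleGraph.Adj.reachable ?_)
            rw [cycG_adj hk f hf]
            left
            push_cast
            rw [add_assoc]
        have := key (j - i).val
        simpa using this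
    rw [this, ← Set.image_univ, Set.ncard_image_of_injective, Set.ncard_univ, Nat.card_zmod]
    intro a b hab
    have := hf hab
    simpa using this
  · rw [hsupp, ← Set.image_univ, Set.ncard_image_of_injective _ hf, Set.ncard_univ, Nat.card_prod,
      Nat.card_zmod, Nat.card_eq_fintype_card, mul_comm]

lemma mem_cycG {W ι : Type*} {k : ℕ} (hk : 3 ≤ k) (f : ι × ZMod k → W)
    (hf : Function.Injective f) (e : Sym2 W) :
    e ∈ (cycG f).edgeSet ↔ ∃ t i, s(f (t, i), f (t, i + 1)) = e := by
  constructor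
  · induction e with
    | _ a b =>
      intro h
      rw [SimpleGraph.mem_edgeSet] at h
      unfold cycG at h
      rw [SimpleGraph.fromRel_adj] at h
      rcases h with ⟨_, ⟨t', i', h1, h2⟩ | ⟨t', i', h1, h2⟩⟩
      · exact ⟨t', i', by rw [h1, h2]⟩
      · exact ⟨t', i', by rw [h1, h2, Sym2.eq_swap]⟩
  · rintro ⟨t, i, rfl⟩
    rw [SimpleGraph.mem_edgeSet, cycG_adj hk f hf]
    exact Or.inl rfl

lemma arcs_fin (k : ℕ) (hk : 3 ≤ k)
    (c : ZMod k → Bool × ZMod k → Fin (2 * k + 1)) (hc : ∀ s, Function.Injective (c s))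
    (h : Unit × ZMod k → Fin (2 * k + 1)) (hh : Function.Injective h)
    (cover : ∀ a b, a ≠ b → (∃ s t i, s(c s (t, i), c s (t, i + 1)) = s(a, b)) ∨
      ∃ i, s(h ((), i), h ((), i + 1)) = s(a, b)) : IsARCS k (2 * k + 1) := by
  classical
  have : NeZero k := ⟨by omega⟩
  have e1 : (2 * k + 1 - 1) / 2 = k := by omega
  have e2 : (2 * k + 1 - 1) / k = 2 := by
    rw [Nat.add_sub_cancel]; exact Nat.mul_div_cancel _ (by omega)
  have e3 : (2 * k + 1 - 1) / (2 * k) = 1 := by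
    rw [Nat.add_sub_cancel]; exact Nat.div_self (by omega)
  have ee : Fin ((2 * k + 1 - 1) / 2) ≃ ZMod k :=
    Fintype.equivOfCardEq (by rw [Fintype.card_fin, ZMod.card, e1])
  let φ : (ZMod k × Bool × ZMod k) ⊕ ZMod k → Sym2 (Fin (2 * k + 1)) := fun x =>
    match x with
    | Sum.inl (s, t, i) => s(c s (t, i), c s (t, i + 1))
    | Sum.inr i => s(h ((), i), h ((), i + 1))
  have hφ1 : (⊤ : SimpleGraph (Fin (2 * k + 1))).edgeFinset ⊆ Finset.univ.image φ := by
    intro e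
    induction e with
    | _ a b =>
      intro he
      rw [SimpleGraph.mem_edgeFinset, SimpleGraph.mem_edgeSet, SimpleGraph.top_adj] at he
      rw [Finset.mem_image]
      rcases cover a b he with ⟨s, t, i, h1⟩ | ⟨i, h1⟩
      · exact ⟨Sum.inl (s, t, i), Finset.mem_univ _, h1⟩
      · exact ⟨Sum.inr i, Finset.mem_univ _, h1⟩
  have hcard := Finset.card_le_card hφ1
  rw [SimpleGraph.card_edgeFinset_top_eq_card_choose_two, Fintype.card_fin] at hcard
  have hch : (2 * k + 1).choose 2 = k * (2 * k) + k := by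
    rw [Nat.choose_two_right, Nat.add_sub_cancel]
    apply Nat.div_eq_of_eq_mul_left (by norm_num)
    ring
  have hinj : Function.Injective φ := by
    have : (Finset.univ.image φ).card = (Finset.univ : Finset ((ZMod k × Bool × ZMod k) ⊕ ZMod k)).card := by
      apply le_antisymm Finset.card_image_le
      refine le_trans ?_ hcard
      rw [hch, Finset.card_univ]
      simp
    have := Finset.card_image_iff.1 this
    simpa [Set.injOn_univ] using this
  refine ⟨fun x => match x with
    | Sum.inl i => cycG (c (ee i))
    | Sum.inr _ => cycG h, ?_, ?_, ?_, ?_⟩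
  · intro i
    have := cycG_class hk (c (ee i)) (hc _)
    rw [e2]
    simpa using this
  · intro j
    have := cycG_class hk h hh
    rw [e3]
    simpa using this
  · intro x y hxy
    rw [Set.disjoint_left]
    intro e hx hy
    apply hxy
    rcases x with x | x <;> rcases y with y | y
    · rw [mem_cycG hk _ (hc _)] at hx hy
      obtain ⟨t, i, h1⟩ := hx
      obtain ⟨t', i', h2⟩ := hy
      have := @hinj (Sum.inl (ee x, t, i)) (Sum.inl (ee y, t', i')) (h1.trans h2.symm)
      simp at this
      rw [this.1]
    · rw [mem_cycG hk _ (hc _)] at hx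
      rw [mem_cycG hk _ hh] at hy
      obtain ⟨t, i, h1⟩ := hx
      obtain ⟨t', i', h2⟩ := hy
      have := @hinj (Sum.inl (ee x, t, i)) (Sum.inr i') (h1.trans h2.symm)
      simp at this
    · rw [mem_cycG hk _ hh] at hx
      rw [mem_cycG hk _ (hc _)] at hy
      obtain ⟨t, i, h1⟩ := hx
      obtain ⟨t', i', h2⟩ := hy
      have := @hinj (Sum.inr i) (Sum.inl (ee y, t', i')) (h1.trans h2.symm)
      simp at this
    · rfl
  · intro e
    constructor
    · induction e with
      | _ a b =>
        intro he
        rw [SimpleGraph.mem_edgeSet, SimpleGraph.top_adj] at he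
        rcases cover a b he with ⟨s, t, i, h1⟩ | ⟨i, h1⟩
        · refine ⟨Sum.inl (ee.symm s), ?_⟩
          rw [mem_cycG hk _ (hc _)]
          exact ⟨t, i, by simpa using h1⟩
        · refine ⟨Sum.inr (), ?_⟩
          rw [mem_cycG hk _ hh]
          exact ⟨(), i, h1⟩
    · rintro ⟨x | x, hx⟩
      · exact SimpleGraph.edgeSet_mono le_top hx
      · exact SimpleGraph.edgeSet_mono le_top hx

lemma arcs_of (k : ℕ) (hk : 3 ≤ k) {V : Type} [Fintype V] (hV : Fintype.card V = 2 * k + 1)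
    (c : ZMod k → Bool × ZMod k → V) (hc : ∀ s, Function.Injective (c s))
    (h : Unit × ZMod k → V) (hh : Function.Injective h)
    (cover : ∀ a b, a ≠ b → (∃ s t i, s(c s (t, i), c s (t, i + 1)) = s(a, b)) ∨
      ∃ i, s(h ((), i), h ((), i + 1)) = s(a, b)) : IsARCS k (2 * k + 1) := by
  have e : V ≃ Fin (2 * k + 1) := Fintype.equivFinOfCardEq hV
  refine arcs_fin k hk (fun s x => e (c s x)) (fun s => e.injective.comp (hc s))
    (fun x => e (h x)) (e.injective.comp hh) ?_
  intro a b hab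
  have hab' : e.symm a ≠ e.symm b := fun h => hab (e.symm.injective h)
  rcases cover _ _ hab' with ⟨s, t, i, h1⟩ | ⟨i, h1⟩
  · left
    refine ⟨s, t, i, ?_⟩
    have := congrArg (Sym2.map e) h1
    simpa using this
  · right
    refine ⟨i, ?_⟩
    have := congrArg (Sym2.map e) h1
    simpa using this

/-! ### Graceful paths with prescribed start -/

def Gr (n a : ℕ) (p : ℕ → ℕ) : Prop :=
  p 0 = a ∧ (∀ i, i < n → p i < n) ∧ (∀ v, v < n → ∃ i, i < n ∧ p i = v) ∧
    ∀ d, 1 ≤ d → d < n → ∃ i, i + 1 < n ∧ (p (i + 1) = p i + d ∨ p i = p (i + 1) + d)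

lemma gr_zero (m : ℕ) : ∃ p, Gr (m + 1) 0 p := by
  induction m with
  | zero =>
    refine ⟨fun _ => 0, rfl, fun i _ => by simp, fun v hv => ⟨0, by omega, by simp only; omega⟩, ?_⟩
    intro d h1 h2; omega
  | succ m ih =>
    obtain ⟨p, h0, h1, h2, h3⟩ := ih
    refine ⟨fun i => if i = 0 then 0 else m + 1 - p (i - 1), rfl, ?_, ?_, ?_⟩
    · intro i hi
      dsimp only
      split_ifs <;> omega
    · intro v hv
      by_cases hv0 : v = 0
      · exact ⟨0, by omega, by simp [hv0]⟩
      · obtain ⟨i, hi, hp⟩ := h2 (m + 1 - v) (by omega)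
        refine ⟨i + 1, by omega, ?_⟩
        simp only [Nat.add_sub_cancel]
        rw [if_neg (by omega), hp]; omega
    · intro d hd1 hd2
      by_cases hd : d = m + 1
      · refine ⟨0, by omega, ?_⟩
        left
        simp [h0, hd]
      · obtain ⟨i, hi, hp⟩ := h3 d hd1 (by omega)
        have := h1 i (by omega)
        have := h1 (i + 1) hi
        refine ⟨i + 1, by omega, ?_⟩
        simp only [Nat.add_sub_cancel]
        rw [if_neg (by omega), if_neg (by omega)]
        omega

lemma gr_step (m : ℕ) (hm : 2 ≤ m) (ih : ∃ p, Gr m 1 p) : ∃ p, Gr (m + 3) 1 p := by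
  obtain ⟨p, h0, h1, h2, h3⟩ := ih
  refine ⟨fun i => if i = 0 then 1 else if i = 1 then m + 2 else if i = 2 then 0
    else m + 1 - p (i - 3), rfl, ?_, ?_, ?_⟩
  · intro i hi
    dsimp only
    split_ifs <;> omega
  · intro v hv
    by_cases hv0 : v = 0
    · exact ⟨2, by omega, by simp [hv0]⟩
    by_cases hv1 : v = 1
    · exact ⟨0, by omega, by simp [hv1]⟩
    by_cases hv2 : v = m + 2
    · exact ⟨1, by omega, by simp [hv2]⟩
    obtain ⟨i, hi, hp⟩ := h2 (m + 1 - v) (by omega)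
    refine ⟨i + 3, by omega, ?_⟩
    simp only [Nat.add_sub_cancel]
    rw [if_neg (by omega), if_neg (by omega), if_neg (by omega), hp]; omega
  · intro d hd1 hd2
    by_cases hd : d = m + 1
    · refine ⟨0, by omega, ?_⟩
      left
      simp [hd]; omega
    by_cases hd' : d = m + 2
    · refine ⟨1, by omega, ?_⟩
      right
      simp [hd']
    by_cases hd'' : d = m
    · refine ⟨2, by omega, ?_⟩
      left
      simp [h0, hd'']
    · obtain ⟨i, hi, hp⟩ := h3 d hd1 (by omega)
      have := h1 i (by omega)
      have := h1 (i + 1) hi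
      refine ⟨i + 3, by omega, ?_⟩
      have e : i + 3 + 1 - 3 = i + 1 := by omega
      simp only [Nat.add_sub_cancel, e]
      rw [if_neg (by omega), if_neg (by omega), if_neg (by omega), if_neg (by omega),
        if_neg (by omega), if_neg (by omega)]
      omega

lemma gr_one (m : ℕ) (hm : 2 ≤ m) : ∃ p, Gr m 1 p := by
  induction m using Nat.strong_induction_on with
  | _ m ih =>
    by_cases h : 5 ≤ m
    · obtain ⟨m', rfl⟩ : ∃ m', m = m' + 3 := ⟨m - 3, by omega⟩
      exact gr_step m' (by omega) (ih m' (by omega) (by omega))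
    · have : m = 2 ∨ m = 3 ∨ m = 4 := by omega
      rcases this with rfl | rfl | rfl
      · refine ⟨fun i => if i = 0 then 1 else 0, ?_⟩
        unfold Gr
        refine ⟨rfl, by decide, by decide, ?_⟩
        intro d h1 h2
        interval_cases d
        exact ⟨0, by decide⟩
      · refine ⟨fun i => if i = 0 then 1 else if i = 1 then 2 else 0, ?_⟩
        unfold Gr
        refine ⟨rfl, by decide, by decide, ?_⟩
        intro d h1 h2
        interval_cases d
        · exact ⟨0, by decide⟩
        · exact ⟨1, by decide⟩
      · refine ⟨fun i => if i = 0 then 1 else if i = 1 then 2 else if i = 2 then 0 else 3, ?_⟩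
        unfold Gr
        refine ⟨rfl, by decide, by decide, ?_⟩
        intro d h1 h2
        interval_cases d
        · exact ⟨0, by decide⟩
        · exact ⟨1, by decide⟩
        · exact ⟨2, by decide⟩

/-! ### The base class -/

/-- The cycle through the point at infinity (here `none`). -/
def cycA (n : ℕ) (p q : ℕ → ℕ) (i : ℕ) : Option (ZMod (2 * n + 1) × Bool) :=
  if i = 0 then none
  else if i ≤ n then some (((n + 1 + p (n - i) : ℕ) : ZMod (2 * n + 1)), false)
  else some (((n + 1 + q (i - n - 1) : ℕ) : ZMod (2 * n + 1)), true)

/-- The other cycle. -/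
def cycB (n j : ℕ) (i : ℕ) : Option (ZMod (2 * n + 1) × Bool) :=
  if i % 2 = 0 then some (((i / 2 : ℕ) : ZMod (2 * n + 1)), true)
  else if j < n - i / 2 then some (((n - i / 2 : ℕ) : ZMod (2 * n + 1)), false)
  else some (((n - i / 2 - 1 : ℕ) : ZMod (2 * n + 1)), false)

/-- The two cycles of the base class. -/
def baseC (n j : ℕ) (p q : ℕ → ℕ) (x : Bool × ZMod (2 * n + 1)) :
    Option (ZMod (2 * n + 1) × Bool) :=
  if x.1 then cycB n j x.2.val else cycA n p q x.2.val

/-- Translation. -/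
def shift {n : ℕ} (s : ZMod (2 * n + 1)) (x : Option (ZMod (2 * n + 1) × Bool)) :
    Option (ZMod (2 * n + 1) × Bool) :=
  x.map (fun y => (y.1 + s, y.2))

lemma shift_inj {n : ℕ} (s : ZMod (2 * n + 1)) : Function.Injective (shift s) := by
  apply Option.map_injective
  rintro ⟨a, b⟩ ⟨c, d⟩ h
  simpa using h

lemma baseC_nat (n j : ℕ) (p q : ℕ → ℕ) (t : Bool) (i : ℕ) (hi : i < 2 * n + 1) :
    baseC n j p q (t, (i : ZMod (2 * n + 1))) = if t then cycB n j i else cycA n p q i := by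
  unfold baseC
  simp only
  rw [ZMod.val_cast_of_lt hi]

lemma base_surj (n j a b : ℕ) (p q : ℕ → ℕ) (hj : j ≤ n) (hp : Gr n a p) (hq : Gr n b q)
    (x : Option (ZMod (2 * n + 1) × Bool))
    (hx : x ≠ some ((j : ZMod (2 * n + 1)), false)) : ∃ y, baseC n j p q y = x := by
  suffices h : ∃ (t : Bool) (i : ℕ), i < 2 * n + 1 ∧
      (if t then cycB n j i else cycA n p q i) = x by
    obtain ⟨t, i, hi, h⟩ := h
    exact ⟨_, (baseC_nat n j p q t i hi).trans h⟩
  obtain ⟨-, hp1, hp2, -⟩ := hp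
  obtain ⟨-, hq1, hq2, -⟩ := hq
  rcases x with _ | ⟨x, t⟩
  · exact ⟨false, 0, by omega, by simp [cycA]⟩
  obtain ⟨v, hv, rfl⟩ : ∃ v : ℕ, v < 2 * n + 1 ∧ (v : ZMod (2 * n + 1)) = x :=
    ⟨x.val, ZMod.val_lt x, by simp⟩
  cases t
  · by_cases hvn : n < v
    · obtain ⟨i, hi, h⟩ := hp2 (v - (n + 1)) (by omega)
      refine ⟨false, n - i, by omega, ?_⟩
      unfold cycA
      have e : n - (n - i) = i := by omega
      rw [if_neg (by simp), if_neg (by omega), if_pos (by omega), e, h]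
      have e : n + 1 + (v - (n + 1)) = v := by omega
      rw [e]
    · have hvj : v ≠ j := by rintro rfl; exact hx rfl
      by_cases hvj' : j < v
      · refine ⟨true, 2 * (n - v) + 1, by omega, ?_⟩
        unfold cycB
        have e : (2 * (n - v) + 1) / 2 = n - v := by omega
        rw [if_pos rfl, if_neg (by omega), e]
        have e : n - (n - v) = v := by omega
        rw [e, if_pos hvj']
      · refine ⟨true, 2 * (n - 1 - v) + 1, by omega, ?_⟩
        unfold cycB
        have e : (2 * (n - 1 - v) + 1) / 2 = n - 1 - v := by omega
        rw [if_pos rfl, if_neg (by omega), e, if_neg (by omega)]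
        have e : n - (n - 1 - v) - 1 = v := by omega
        rw [e]
  · by_cases hvn : n < v
    · obtain ⟨i, hi, h⟩ := hq2 (v - (n + 1)) (by omega)
      refine ⟨false, n + 1 + i, by omega, ?_⟩
      unfold cycA
      have e : n + 1 + i - n - 1 = i := by omega
      rw [if_neg (by simp), if_neg (by omega), if_neg (by omega), e, h]
      have e : n + 1 + (v - (n + 1)) = v := by omega
      rw [e]
    · refine ⟨true, 2 * v, by omega, ?_⟩
      unfold cycB
      have e : 2 * v / 2 = v := by omega
      rw [if_pos rfl, if_pos (by omega), e]

lemma base_inj (n j a b : ℕ) (p q : ℕ → ℕ) (hj : j ≤ n) (hp : Gr n a p) (hq : Gr n b q) :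
    Function.Injective (baseC n j p q) := by
  classical
  have hsub : (Finset.univ.erase (some ((j : ZMod (2 * n + 1)), false))) ⊆
      Finset.univ.image (baseC n j p q) := by
    intro x hx
    rw [Finset.mem_erase] at hx
    obtain ⟨y, hy⟩ := base_surj n j a b p q hj hp hq x hx.1
    exact Finset.mem_image.2 ⟨y, Finset.mem_univ _, hy⟩
  have hcard := Finset.card_le_card hsub
  rw [Finset.card_erase_of_mem (Finset.mem_univ _), Finset.card_univ, Fintype.card_option,
    Fintype.card_prod, Fintype.card_bool, ZMod.card] at hcard
  have : (Finset.univ.image (baseC n j p q)).card =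
      (Finset.univ : Finset (Bool × ZMod (2 * n + 1))).card := by
    apply le_antisymm Finset.card_image_le
    rw [Finset.card_univ, Fintype.card_prod, Fintype.card_bool, ZMod.card]
    omega
  have := Finset.card_image_iff.1 this
  simpa [Set.injOn_univ] using this

/-- `x`, `y` are consecutive in the base class. -/
def Cons (n j : ℕ) (p q : ℕ → ℕ) (x y : Option (ZMod (2 * n + 1) × Bool)) : Prop :=
  ∃ t i, s(baseC n j p q (t, i), baseC n j p q (t, i + 1)) = s(x, y)

lemma Cons.symm {n j : ℕ} {p q : ℕ → ℕ} {x y : Option (ZMod (2 * n + 1) × Bool)}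
    (h : Cons n j p q x y) : Cons n j p q y x := by
  obtain ⟨t, i, h⟩ := h
  exact ⟨t, i, h.trans Sym2.eq_swap⟩

lemma consA (n j : ℕ) (p q : ℕ → ℕ) (i : ℕ) (hi : i + 1 < 2 * n + 1) :
    Cons n j p q (cycA n p q i) (cycA n p q (i + 1)) := by
  refine ⟨false, (i : ZMod (2 * n + 1)), ?_⟩
  have e : (i : ZMod (2 * n + 1)) + 1 = ((i + 1 : ℕ) : ZMod (2 * n + 1)) := by push_cast; rfl
  rw [e, baseC_nat _ _ _ _ _ _ (by omega), baseC_nat _ _ _ _ _ _ hi]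
  simp

lemma consB (n j : ℕ) (p q : ℕ → ℕ) (i : ℕ) (hi : i + 1 < 2 * n + 1) :
    Cons n j p q (cycB n j i) (cycB n j (i + 1)) := by
  refine ⟨true, (i : ZMod (2 * n + 1)), ?_⟩
  have e : (i : ZMod (2 * n + 1)) + 1 = ((i + 1 : ℕ) : ZMod (2 * n + 1)) := by push_cast; rfl
  rw [e, baseC_nat _ _ _ _ _ _ (by omega), baseC_nat _ _ _ _ _ _ hi]
  simp

lemma cons_close (n : ℕ) : ((2 * n : ℕ) : ZMod (2 * n + 1)) + 1 = ((0 : ℕ) : ZMod (2 * n + 1)) := by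
  have := ZMod.natCast_self (2 * n + 1)
  push_cast at this ⊢
  exact this

lemma consA' (n j : ℕ) (p q : ℕ → ℕ) :
    Cons n j p q (cycA n p q (2 * n)) (cycA n p q 0) := by
  refine ⟨false, ((2 * n : ℕ) : ZMod (2 * n + 1)), ?_⟩
  rw [cons_close, baseC_nat _ _ _ _ _ _ (by omega), baseC_nat _ _ _ _ _ _ (by omega)]
  simp

lemma consB' (n j : ℕ) (p q : ℕ → ℕ) :
    Cons n j p q (cycB n j (2 * n)) (cycB n j 0) := by
  refine ⟨true, ((2 * n : ℕ) : ZMod (2 * n + 1)), ?_⟩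
  rw [cons_close, baseC_nat _ _ _ _ _ _ (by omega), baseC_nat _ _ _ _ _ _ (by omega)]
  simp

/-- pure differences, first kind -/
lemma cons_pure0 (n j a : ℕ) (p q : ℕ → ℕ) (hp : Gr n a p) (d : ℕ) (h1 : 1 ≤ d) (h2 : d < n) :
    ∃ u : ZMod (2 * n + 1), Cons n j p q (some (u, false)) (some (u + d, false)) := by
  obtain ⟨-, -, -, h⟩ := hp
  obtain ⟨i, hi, h⟩ := h d h1 h2
  have key := consA n j p q (n - (i + 1)) (by omega)
  unfold cycA at key
  have e1 : n - (n - (i + 1)) = i + 1 := by omega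
  have e2 : n - (n - (i + 1) + 1) = i := by omega
  rw [if_neg (by omega), if_pos (by omega), if_neg (by omega), if_pos (by omega), e1, e2] at key
  rcases h with h | h
  · rw [h] at key
    refine ⟨((n + 1 + p i : ℕ) : ZMod (2 * n + 1)), ?_⟩
    · convert key.symm using 3
      push_cast; ring
  · rw [h] at key
    refine ⟨((n + 1 + p (i + 1) : ℕ) : ZMod (2 * n + 1)), ?_⟩
    · convert key using 3
      push_cast; ring

lemma cons_pure1 (n j b : ℕ) (p q : ℕ → ℕ) (hq : Gr n b q) (d : ℕ) (h1 : 1 ≤ d) (h2 : d ≤ n) :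
    ∃ u : ZMod (2 * n + 1), Cons n j p q (some (u, true)) (some (u + d, true)) := by
  by_cases hd : d = n
  · subst hd
    have key := consB' d j p q
    unfold cycB at key
    have e : 2 * d / 2 = d := by omega
    rw [if_pos (by omega), if_pos (by omega), e] at key
    refine ⟨0, ?_⟩
    convert key.symm using 3 <;> simp
  obtain ⟨-, -, -, h⟩ := hq
  obtain ⟨i, hi, h⟩ := h d h1 (by omega)
  have key := consA n j p q (n + 1 + i) (by omega)
  unfold cycA at key
  have e1 : n + 1 + i - n - 1 = i := by omega
  have e2 : n + 1 + i + 1 - n - 1 = i + 1 := by omega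
  rw [if_neg (by omega), if_neg (by omega), if_neg (by omega), if_neg (by omega), e1, e2] at key
  rcases h with h | h
  · rw [h] at key
    refine ⟨((n + 1 + q i : ℕ) : ZMod (2 * n + 1)), ?_⟩
    · convert key using 3
      push_cast; ring
  · rw [h] at key
    refine ⟨((n + 1 + q (i + 1) : ℕ) : ZMod (2 * n + 1)), ?_⟩
    · convert key.symm using 3
      push_cast; ring

lemma cons_mixed (n j a : ℕ) (p q : ℕ → ℕ) (hn : 1 ≤ n) (hj : j ≤ n) (hp : Gr n a p) (hq : Gr n 0 q)
    (hja : 2 * j = n + a) (c : ℤ) (h1 : -(n : ℤ) ≤ c) (h2 : c ≤ n) :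
    ∃ u : ZMod (2 * n + 1), Cons n j p q (some (u + c, false)) (some (u, true)) := by
  suffices h : ∃ x y : ℕ, (x : ℤ) = y + c ∧
      Cons n j p q (some ((x : ZMod (2 * n + 1)), false)) (some ((y : ZMod (2 * n + 1)), true)) by
    obtain ⟨x, y, h, h'⟩ := h
    refine ⟨(y : ZMod (2 * n + 1)), ?_⟩
    convert h' using 3
    have := congrArg (Int.cast : ℤ → ZMod (2 * n + 1)) h
    push_cast at this
    exact this.symm
  by_cases hca : c = a
  · refine ⟨n + 1 + p 0, n + 1 + q 0, ?_, ?_⟩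
    · rw [hp.1, hq.1]; push_cast; omega
    · have key := consA n j p q n (by omega)
      unfold cycA at key
      have e : n + 1 - n - 1 = 0 := by omega
      rw [if_neg (by omega), if_pos (by omega), if_neg (by omega), if_neg (by omega), e,
        Nat.sub_self] at key
      exact key
  -- an edge `y_i x` at positions `2 i`, `2 i + 1`
  have keyE : ∀ i x : ℕ, i < n → ((j < n - i ∧ x = n - i) ∨ (¬ j < n - i ∧ x = n - i - 1)) →
      Cons n j p q (some ((x : ZMod (2 * n + 1)), false)) (some ((i : ZMod (2 * n + 1)), true)) := by
    intro i x hi hx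
    have key := consB n j p q (2 * i) (by omega)
    unfold cycB at key
    have e : 2 * i / 2 = i := by omega
    have e' : (2 * i + 1) / 2 = i := by omega
    rw [if_pos (by omega), if_neg (by omega), e, e'] at key
    rcases hx with ⟨hx, rfl⟩ | ⟨hx, rfl⟩
    · rw [if_pos hx] at key
      exact key.symm
    · rw [if_neg hx] at key
      exact key.symm
  have keyO : ∀ i x : ℕ, i < n → ((j < n - i ∧ x = n - i) ∨ (¬ j < n - i ∧ x = n - i - 1)) →
      Cons n j p q (some ((x : ZMod (2 * n + 1)), false))
        (some (((i + 1 : ℕ) : ZMod (2 * n + 1)), true)) := by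
    intro i x hi hx
    have key := consB n j p q (2 * i + 1) (by omega)
    unfold cycB at key
    have e : (2 * i + 1) / 2 = i := by omega
    have e' : (2 * i + 1 + 1) / 2 = i + 1 := by omega
    rw [if_neg (show ¬ (2 * i + 1) % 2 = 0 by omega), if_pos (show (2 * i + 1 + 1) % 2 = 0 by omega), e, e'] at key
    rcases hx with ⟨hx, rfl⟩ | ⟨hx, rfl⟩
    · rw [if_pos hx] at key
      exact key
    · rw [if_neg hx] at key
      exact key
  by_cases hlt : (a : ℤ) < c
  · by_cases hpar : (n - c) % 2 = 0
    · obtain ⟨i, hi⟩ : ∃ i : ℕ, (i : ℤ) = (n - c) / 2 := ⟨((n - c) / 2).toNat, by omega⟩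
      exact ⟨n - i, i, by omega, keyE i _ (by omega) (Or.inl ⟨by omega, rfl⟩)⟩
    · obtain ⟨i, hi⟩ : ∃ i : ℕ, (i : ℤ) = (n - 1 - c) / 2 := ⟨((n - 1 - c) / 2).toNat, by omega⟩
      exact ⟨n - i, i + 1, by omega, keyO i _ (by omega) (Or.inl ⟨by omega, rfl⟩)⟩
  · by_cases hpar : (n - c) % 2 = 0
    · obtain ⟨i, hi⟩ : ∃ i : ℕ, (i : ℤ) = (n - 2 - c) / 2 := ⟨((n - 2 - c) / 2).toNat, by omega⟩
      exact ⟨n - i - 1, i + 1, by omega, keyO i _ (by omega) (Or.inr ⟨by omega, rfl⟩)⟩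
    · obtain ⟨i, hi⟩ : ∃ i : ℕ, (i : ℤ) = (n - 1 - c) / 2 := ⟨((n - 1 - c) / 2).toNat, by omega⟩
      exact ⟨n - i - 1, i, by omega, keyE i _ (by omega) (Or.inr ⟨by omega, rfl⟩)⟩

/-- The half class. -/
def halfC (n : ℕ) (x : Unit × ZMod (2 * n + 1)) : Option (ZMod (2 * n + 1) × Bool) :=
  some (x.2 * n, false)

lemma two_n (n : ℕ) : 2 * (n : ZMod (2 * n + 1)) + 1 = 0 := by
  have := ZMod.natCast_self (2 * n + 1)
  push_cast at this
  exact this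

lemma halfC_inj (n : ℕ) : Function.Injective (halfC n) := by
  rintro ⟨⟨⟩, x⟩ ⟨⟨⟩, y⟩ h
  simp only [halfC, Option.some.injEq, Prod.mk.injEq, and_true] at h
  simp only [Prod.mk.injEq, true_and]
  linear_combination (-2) * h + (x - y) * two_n n

/-- `x`, `y` are consecutive in some cycle. -/
def Cov (n j : ℕ) (p q : ℕ → ℕ) (x y : Option (ZMod (2 * n + 1) × Bool)) : Prop :=
  (∃ s t i, s(shift s (baseC n j p q (t, i)), shift s (baseC n j p q (t, i + 1))) = s(x, y)) ∨
      ∃ i, s(halfC n ((), i), halfC n ((), i + 1)) = s(x, y)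

lemma Cov.symm {n j : ℕ} {p q : ℕ → ℕ} {x y : Option (ZMod (2 * n + 1) × Bool)}
    (h : Cov n j p q x y) : Cov n j p q y x := by
  unfold Cov at *
  rw [Sym2.eq_swap]
  exact h

lemma Cons.cov {n j : ℕ} {p q : ℕ → ℕ} {x y : Option (ZMod (2 * n + 1) × Bool)}
    (h : Cons n j p q x y) (s : ZMod (2 * n + 1)) : Cov n j p q (shift s x) (shift s y) := by
  obtain ⟨t, i, h⟩ := h
  left
  refine ⟨s, t, i, ?_⟩
  have := congrArg (Sym2.map (shift s)) h
  simpa using this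

lemma exists_repr (n : ℕ) (x : ZMod (2 * n + 1)) :
    ∃ c : ℤ, -(n : ℤ) ≤ c ∧ c ≤ n ∧ (c : ZMod (2 * n + 1)) = x := by
  have h1 : x.val < 2 * n + 1 := ZMod.val_lt x
  have h2 : ((x.val : ℕ) : ZMod (2 * n + 1)) = x := by simp
  by_cases h : x.val ≤ n
  · exact ⟨x.val, by omega, by omega, by push_cast; exact h2⟩
  · refine ⟨x.val - (2 * n + 1), by omega, by omega, ?_⟩
    push_cast
    rw [h2, two_n]; ring

lemma cover_all (n j a : ℕ) (p q : ℕ → ℕ) (hn : 1 ≤ n) (hj : j ≤ n) (hp : Gr n a p) (hq : Gr n 0 q)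
    (hja : 2 * j = n + a) (x y : Option (ZMod (2 * n + 1) × Bool)) (hxy : x ≠ y) :
    Cov n j p q x y := by
  have hinf : ∀ (x : ZMod (2 * n + 1)) (t : Bool), Cov n j p q none (some (x, t)) := by
    intro x t
    cases t
    · have key := consA n j p q 0 (by omega)
      unfold cycA at key
      rw [if_pos rfl, if_neg (by omega), if_pos (by omega)] at key
      have := key.cov (x - ((n + 1 + p (n - (0 + 1)) : ℕ) : ZMod (2 * n + 1)))
      simpa [shift] using this
    · have key := (consA' n j p q).symm
      unfold cycA at key
      rw [if_pos rfl, if_neg (by omega), if_neg (by omega)] at key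
      have := key.cov (x - ((n + 1 + q (2 * n - n - 1) : ℕ) : ZMod (2 * n + 1)))
      simpa [shift] using this
  have hmix : ∀ x y : ZMod (2 * n + 1), Cov n j p q (some (x, false)) (some (y, true)) := by
    intro x y
    obtain ⟨c, h1, h2, h3⟩ := exists_repr n (x - y)
    obtain ⟨u, hu⟩ := cons_mixed n j a p q hn hj hp hq hja c h1 h2
    have := hu.cov (y - u)
    have e : u + (x - y) + (y - u) = x := by ring
    simpa [shift, h3, e] using this
  have hpos : ∀ (t : Bool) (x : ZMod (2 * n + 1)) (d : ℕ), 1 ≤ d → d ≤ n →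
      Cov n j p q (some (x, t)) (some (x + d, t)) := by
    intro t x d h1 h2
    cases t
    · by_cases hd : d = n
      · subst hd
        right
        refine ⟨-2 * x, ?_⟩
        have e1 : -2 * x * (d : ZMod (2 * d + 1)) = x := by
          linear_combination (-x) * two_n d
        have e2 : (-2 * x + 1) * (d : ZMod (2 * d + 1)) = x + d := by
          linear_combination (-x) * two_n d
        unfold halfC
        simp only [e1, e2]
      · obtain ⟨u, hu⟩ := cons_pure0 n j a p q hp d h1 (by omega)
        have := hu.cov (x - u)
        have e : u + d + (x - u) = x + d := by ring
        simpa [shift, e] using this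
    · obtain ⟨u, hu⟩ := cons_pure1 n j 0 p q hq d h1 h2
      have := hu.cov (x - u)
      have e : u + d + (x - u) = x + d := by ring
      simpa [shift, e] using this
  have hpure : ∀ (t : Bool) (x y : ZMod (2 * n + 1)), x ≠ y →
      Cov n j p q (some (x, t)) (some (y, t)) := by
    intro t x y hxy
    obtain ⟨c, h1, h2, h3⟩ := exists_repr n (y - x)
    rcases lt_trichotomy c 0 with hc | hc | hc
    · obtain ⟨d, hd⟩ : ∃ d : ℕ, (d : ℤ) = -c := ⟨(-c).toNat, by omega⟩
      have := hpos t y d (by omega) (by omega)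
      have e : y + (d : ZMod (2 * n + 1)) = x := by
        have hd' := congrArg (Int.cast : ℤ → ZMod (2 * n + 1)) hd
        push_cast at hd'
        rw [hd', h3]; ring
      rw [e] at this
      exact this.symm
    · subst hc
      exfalso
      apply hxy
      simp only [Int.cast_zero] at h3
      exact (sub_eq_zero.1 h3.symm).symm
    · obtain ⟨d, hd⟩ : ∃ d : ℕ, (d : ℤ) = c := ⟨c.toNat, by omega⟩
      have := hpos t x d (by omega) (by omega)
      have e : x + (d : ZMod (2 * n + 1)) = y := by
        have hd' := congrArg (Int.cast : ℤ → ZMod (2 * n + 1)) hd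
        push_cast at hd'
        rw [hd', h3]; ring
      rw [e] at this
      exact this
  rcases x with _ | ⟨x, t⟩ <;> rcases y with _ | ⟨y, t'⟩
  · exact absurd rfl hxy
  · exact hinf _ _
  · exact (hinf _ _).symm
  · cases t <;> cases t'
    · exact hpure _ _ _ (fun h => hxy (by rw [h]))
    · exact hmix _ _
    · exact (hmix _ _).symm
    · exact hpure _ _ _ (fun h => hxy (by rw [h]))

lemma arcs_main (n j a : ℕ) (p q : ℕ → ℕ) (hn : 1 ≤ n) (hj : j ≤ n) (hp : Gr n a p)
    (hq : Gr n 0 q) (hja : 2 * j = n + a) : IsARCS (2 * n + 1) (2 * (2 * n + 1) + 1) := by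
  refine arcs_of (2 * n + 1) (by omega) (V := Option (ZMod (2 * n + 1) × Bool)) ?_
    (fun s x => shift s (baseC n j p q x))
    (fun s => (shift_inj s).comp (base_inj n j a 0 p q hj hp hq)) (halfC n) (halfC_inj n) ?_
  · rw [Fintype.card_option, Fintype.card_prod, Fintype.card_bool, ZMod.card]
    ring
  · intro x y hxy
    exact cover_all n j a p q hn hj hp hq hja x y hxy

theorem stmt4 (k : ℕ) (hk : Odd k) (h9 : 9 ≤ k) : IsARCS k (2 * k + 1) := by
  obtain ⟨n, rfl⟩ := hk
  obtain ⟨q, hq⟩ := gr_zero (n - 1)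
  have e : n - 1 + 1 = n := by omega
  rw [e] at hq
  rcases Nat.even_or_odd' n with ⟨m, hm | hm⟩
  · exact arcs_main n m 0 q q (by omega) (by omega) hq hq (by omega)
  · obtain ⟨p, hp⟩ := gr_one n (by omega)
    exact arcs_main n (m + 1) 1 p q (by omega) (by omega) hp hq (by omega)
end

section
/- Let k ≥ 3, v = 6k+1, and let F be a graph that is a vertex-disjoint union of six cycles of length k with vertices in (Z_{3k} × Z_2) ∪ {∞} satisfying: (i) V(F) = ((Z_{3k} × Z_2) ∪ {∞}) \ {(a,b)} for some (a,b) ∈ Z_{3k} × Z_2; (ii) ∞ has one neighbor in Z_{3k} × {0} and its other neighbor in Z_{3k} × {1}; (iii) Δ_{(0,0)}F ⊇ Z_{3k} \ {0}, Δ_{(0,1)}F ⊇ Z_{3k}, and Δ_{(1,1)}F ⊇ Z_{3k} \ {0, 3, −3}. Then there exists a k-ARCS(6k+1). -/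
open SimpleGraph

theorem cc_comap {V W : Type*} (e : W ≃ V) (F : SimpleGraph V) (k c : ℕ)
    (h : IsCycleClass ⊤ F k c) : IsCycleClass ⊤ (F.comap e) k c := by
  obtain ⟨-, h2, h3, h4⟩ := h
  have hs : ∀ w, w ∈ (F.comap e).support ↔ e w ∈ F.support := by
    intro w
    simp only [SimpleGraph.mem_support, SimpleGraph.comap_adj]
    exact ⟨fun ⟨x, hx⟩ => ⟨e x, hx⟩, fun ⟨x, hx⟩ => ⟨e.symm x, by simpa using hx⟩⟩
  have key : ∀ S : Set V, (e ⁻¹' S).ncard = S.ncard := by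
    intro S
    rw [← Equiv.image_symm_eq_preimage]
    exact Set.ncard_image_of_injective _ e.symm.injective
  refine ⟨le_top, ?_, ?_, ?_⟩
  · intro w hw
    rw [← h2 _ ((hs w).1 hw), ← key]
    rfl
  · intro w hw
    rw [← h3 _ ((hs w).1 hw), ← key]
    congr 1
    ext x
    exact (SimpleGraph.Iso.reachable_iff (φ := SimpleGraph.Iso.comap e F) (u := w) (v := x)).symm
  · rw [← h4, ← key]
    congr 1
    ext w
    exact hs w

theorem cc_dart {V : Type*} [Fintype V] [DecidableEq V] (F : SimpleGraph V)
    [DecidableRel F.Adj] (k c : ℕ)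
    (h : IsCycleClass ⊤ F k c) : Fintype.card F.Dart = 2 * (k * c) := by
  classical
  obtain ⟨-, h2, h3, h4⟩ := h
  rw [SimpleGraph.dart_card_eq_sum_degrees, ← h4]
  have : ∀ v, F.degree v = if v ∈ F.support then 2 else 0 := by
    intro v
    split_ifs with hv
    · rw [← h2 v hv, ← SimpleGraph.card_neighborSet_eq_degree, Set.ncard_eq_toFinset_card',
        Set.toFinset_card]
    · rw [SimpleGraph.degree_eq_zero]
      intro w hw
      exact hv ⟨w, hw⟩
  rw [Finset.sum_congr rfl (fun v _ => this v), ← Finset.sum_filter, Finset.sum_const,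
    Set.ncard_eq_toFinset_card', smul_eq_mul, mul_comm]
  congr 2
  ext v
  simp

theorem decomp_of {V ι : Type*} [Fintype V] [DecidableEq V] [Fintype ι]
    (G : ι → SimpleGraph V) (n : ι → ℕ) [∀ i, DecidableRel (G i).Adj]
    (hn : ∀ i, Fintype.card (G i).Dart = n i)
    (hc : ∀ u v, u ≠ v → ∃ i, (G i).Adj u v)
    (ht : ∑ i, n i = Fintype.card V * (Fintype.card V - 1)) :
    IsDecomp ⊤ G := by
  classical
  let f : (Σ i, (G i).Dart) → (⊤ : SimpleGraph V).Dart :=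
    fun p => ⟨p.2.toProd, p.2.adj.ne⟩
  have hf : Function.Surjective f := by
    rintro ⟨⟨u, v⟩, h⟩
    obtain ⟨i, hi⟩ := hc u v h
    exact ⟨⟨i, ⟨(u, v), hi⟩⟩, rfl⟩
  have hcard : Fintype.card (Σ i, (G i).Dart) = Fintype.card (⊤ : SimpleGraph V).Dart := by
    rw [Fintype.card_sigma, SimpleGraph.dart_card_eq_sum_degrees]
    simp [hn, ht]
  have hb := (Fintype.bijective_iff_surjective_and_card f).2 ⟨hf, hcard⟩
  constructor
  · intro i j hij
    rw [Set.disjoint_left]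
    intro e
    induction e with
    | _ u v =>
      intro h1 h2
      apply hij
      have := @hb.1 ⟨i, ⟨(u, v), h1⟩⟩ ⟨j, ⟨(u, v), h2⟩⟩ rfl
      exact congrArg Sigma.fst this
  · intro e
    induction e with
    | _ u v =>
      constructor
      · intro h
        exact hc u v h
      · rintro ⟨i, h⟩
        exact SimpleGraph.Adj.ne (G := G i) h

def halfG (n : ℕ) : SimpleGraph (Option (ZMod n × ZMod 2)) where
  Adj u v := u ≠ v ∧ ∃ x y : ZMod n, u = some (x, 1) ∧ v = some (y, 1) ∧
    (x - y = 3 ∨ x - y = -3)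
  symm := ⟨by
    rintro u v ⟨h, x, y, h1, h2, h3⟩
    refine ⟨h.symm, y, x, h2, h1, ?_⟩
    rcases h3 with h3 | h3
    · right; rw [← h3]; ring
    · left; rw [← neg_sub, h3]; ring⟩
  loopless := ⟨fun u h => h.1 rfl⟩

theorem half_cc (k : ℕ) (hk : 3 ≤ k) : IsCycleClass ⊤ (halfG (3 * k)) k 3 := by
  classical
  haveI : NeZero (3 * k) := ⟨by omega⟩
  have h6 : (6 : ZMod (3 * k)) ≠ 0 := by
    intro h
    have : ((6 : ℕ) : ZMod (3 * k)) = 0 := by exact_mod_cast h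
    rw [ZMod.natCast_eq_zero_iff] at this
    have := Nat.le_of_dvd (by norm_num) this
    omega
  have h3 : (3 : ZMod (3 * k)) ≠ 0 := by
    intro h
    apply h6
    have : (6 : ZMod (3 * k)) = 3 + 3 := by norm_num
    rw [this, h, add_zero]
  let ψ : ZMod (3 * k) → Option (ZMod (3 * k) × ZMod 2) := fun x => some (x, 1)
  have hψ : Function.Injective ψ := by
    intro x y h
    simpa [ψ] using h
  have hadj : ∀ x y : ZMod (3 * k), (halfG (3 * k)).Adj (ψ x) (ψ y) ↔ (x - y = 3 ∨ x - y = -3) := by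
    intro x y
    constructor
    · rintro ⟨-, a, b, ha, hb, h⟩
      rw [hψ (a₁ := x) (a₂ := a) ha, hψ (a₁ := y) (a₂ := b) hb]
      exact h
    · intro h
      refine ⟨?_, x, y, rfl, rfl, h⟩
      intro he
      have := hψ he
      subst this
      rw [sub_self] at h
      rcases h with h | h
      · exact h3 h.symm
      · exact h3 (neg_eq_zero.1 h.symm)
  have hp : ∀ x : ZMod (3 * k), (halfG (3 * k)).Adj (ψ x) (ψ (x + 3)) := by
    intro x
    rw [hadj]; right; ring
  have hsup : (halfG (3 * k)).support = Set.range ψ := by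
    ext u
    rw [SimpleGraph.mem_support]
    constructor
    · rintro ⟨v, -, x, y, h, -⟩
      exact ⟨x, h.symm⟩
    · rintro ⟨x, rfl⟩
      exact ⟨_, hp x⟩
  have hnb : ∀ x, ∀ v, (halfG (3 * k)).Adj (ψ x) v → ∃ y, v = ψ y := by
    rintro x v ⟨-, a, b, ha, hb, h⟩
    exact ⟨b, hb⟩
  refine ⟨le_top, ?_, ?_, ?_⟩
  · rw [hsup]
    rintro _ ⟨x, rfl⟩
    have : (halfG (3 * k)).neighborSet (ψ x) = {ψ (x - 3), ψ (x + 3)} := by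
      ext v
      rw [SimpleGraph.mem_neighborSet]
      constructor
      · intro h
        obtain ⟨y, rfl⟩ := hnb x v h
        rw [hadj] at h
        rcases h with h | h
        · left; congr 1; rw [← h]; ring
        · right; show ψ y = _; congr 1; rw [← neg_neg (3 : ZMod (3 * k)), ← h]; ring
      · rintro (rfl | h)
        · rw [hadj]; left; ring
        · rw [Set.mem_singleton_iff.1 h]; exact hp x
    rw [this, Set.ncard_pair]
    intro h
    apply h6
    have := hψ h
    linear_combination -this
  · rw [hsup]
    rintro _ ⟨x, rfl⟩
    have hset : {w | (halfG (3 * k)).Reachable (ψ x) w} =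
        (fun z => ψ (x + z)) '' (AddSubgroup.zmultiples (3 : ZMod (3 * k)) : Set (ZMod (3 * k))) := by
      ext w
      constructor
      · rintro ⟨p⟩
        have : ∀ u v (p : (halfG (3 * k)).Walk u v),
            (∃ z ∈ AddSubgroup.zmultiples (3 : ZMod (3 * k)), u = ψ (x + z)) →
            (∃ z ∈ AddSubgroup.zmultiples (3 : ZMod (3 * k)), v = ψ (x + z)) := by
          intro u v p
          induction p with
          | nil => exact id
          | cons h p ih =>
            rintro ⟨z, hz, rfl⟩
            apply ih
            obtain ⟨y, rfl⟩ := hnb _ _ h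
            rw [hadj] at h
            rcases h with h | h
            · refine ⟨z - 3, sub_mem hz (AddSubgroup.mem_zmultiples _), ?_⟩
              congr 1; linear_combination -h
            · refine ⟨z + 3, add_mem hz (AddSubgroup.mem_zmultiples _), ?_⟩
              congr 1; linear_combination -h
        obtain ⟨z, hz, h⟩ := this _ _ p ⟨0, zero_mem _, by rw [add_zero]⟩
        exact ⟨z, hz, h.symm⟩
      · rintro ⟨z, hz, rfl⟩
        obtain ⟨n, rfl⟩ := (mem_zmultiples_iff_mem_range_addOrderOf.1 hz |> fun h => by
          simpa using h : ∃ n < addOrderOf (3 : ZMod (3 * k)), n • (3 : ZMod (3 * k)) = z) |>.imp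
            fun n h => h.2
        show (halfG (3 * k)).Reachable (ψ x) (ψ (x + _))
        clear hz
        induction n with
        | zero => rw [zero_nsmul, add_zero]
        | succ n ih =>
          rw [succ_nsmul, ← add_assoc]
          exact ih.trans (hp _).reachable
    rw [hset, Set.ncard_image_of_injective _ (fun a b h => add_left_cancel (hψ h))]
    rw [← Nat.card_coe_set_eq, SetLike.coe_sort_coe, Nat.card_zmultiples]
    have := ZMod.addOrderOf_coe 3 (n := 3 * k) (by omega)
    rw [Nat.cast_ofNat] at this
    rw [this, Nat.gcd_mul_right_left, Nat.mul_div_cancel_left _ (by norm_num)]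
  · rw [hsup, ← Set.image_univ, Set.ncard_image_of_injective _ hψ, Set.ncard_univ, Nat.card_zmod,
      mul_comm]

def shiftE (n : ℕ) (g : ZMod n) : Option (ZMod n × ZMod 2) ≃ Option (ZMod n × ZMod 2) :=
  Equiv.optionCongr ((Equiv.addRight g).prodCongr (Equiv.refl _))

theorem stmt5 (k : ℕ) (hk : 3 ≤ k)
    (F : SimpleGraph (Option (ZMod (3 * k) × ZMod 2)))
    (hF : (∀ v ∈ F.support, (F.neighborSet v).ncard = 2) ∧
      (∀ v ∈ F.support, {w | F.Reachable v w}.ncard = k) ∧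
      F.support.ncard = 6 * k)
    (hi : ∃ (a : ZMod (3 * k)) (b : ZMod 2), F.support = {x | x ≠ some (a, b)})
    (hii : ∃ x y : ZMod (3 * k), F.Adj none (some (x, 0)) ∧ F.Adj none (some (y, 1)))
    (hiii00 : ∀ z : ZMod (3 * k), z ≠ 0 →
      ∃ x y : ZMod (3 * k), F.Adj (some (x, 0)) (some (y, 0)) ∧ x - y = z)
    (hiii01 : ∀ z : ZMod (3 * k),
      ∃ x y : ZMod (3 * k), F.Adj (some (x, 0)) (some (y, 1)) ∧ x - y = z)
    (hiii11 : ∀ z : ZMod (3 * k), z ≠ 0 → z ≠ 3 → z ≠ -3 →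
      ∃ x y : ZMod (3 * k), F.Adj (some (x, 1)) (some (y, 1)) ∧ x - y = z) :
    IsARCS k (6 * k + 1) := by
  classical
  haveI : NeZero (3 * k) := ⟨by omega⟩
  clear hi
  let V := Option (ZMod (3 * k) × ZMod 2)
  let G : ZMod (3 * k) ⊕ Unit → SimpleGraph V :=
    Sum.elim (fun g => F.comap (shiftE (3 * k) g)) (fun _ => halfG (3 * k))
  have hF' : IsCycleClass ⊤ F k 6 := ⟨le_top, hF.1, hF.2.1, by rw [hF.2.2, mul_comm]⟩
  have hG1 : ∀ g, IsCycleClass ⊤ (G (Sum.inl g)) k 6 := fun g => cc_comap _ _ _ _ hF'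
  have hG2 : ∀ g, IsCycleClass ⊤ (G (Sum.inr g)) k 3 := fun g => half_cc k hk
  have hVc : Fintype.card V = 6 * k + 1 := by
    simp [V, ZMod.card]; ring
  have hs : ∀ g x b, shiftE (3 * k) g (some (x, b)) = some (x + g, b) := fun g x b => rfl
  have hs0 : ∀ g, shiftE (3 * k) g none = none := fun g => rfl
  have hcov : ∀ u v : V, u ≠ v → ∃ i, (G i).Adj u v := by
    have h0 : ∀ p, ∃ i, (G i).Adj none (some p) := by
      obtain ⟨x, y, hx, hy⟩ := hii
      rintro ⟨u, b⟩
      fin_cases b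
      · refine ⟨Sum.inl (x - u), ?_⟩
        show F.Adj (shiftE _ _ none) (shiftE _ _ (some (u, 0)))
        rw [hs, hs0, add_sub_cancel]; exact hx
      · refine ⟨Sum.inl (y - u), ?_⟩
        show F.Adj (shiftE _ _ none) (shiftE _ _ (some (u, 1)))
        rw [hs, hs0, add_sub_cancel]; exact hy
    have gen : ∀ (u w x y : ZMod (3 * k)) (b c : ZMod 2), F.Adj (some (x, b)) (some (y, c)) →
        x - y = u - w → ∃ i, (G i).Adj (some (u, b)) (some (w, c)) := by
      intro u w x y b c h e
      refine ⟨Sum.inl (x - u), ?_⟩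
      show F.Adj (shiftE _ _ (some (u, b))) (shiftE _ _ (some (w, c)))
      have : w + (x - u) = y := by linear_combination e
      rw [hs, hs, add_sub_cancel, this]; exact h
    have h01 : ∀ u w, ∃ i, (G i).Adj (some (u, 0)) (some (w, 1)) := by
      intro u w
      obtain ⟨x, y, h, e⟩ := hiii01 (u - w)
      exact gen _ _ _ _ _ _ h e
    rintro (_ | ⟨u, b⟩) (_ | ⟨w, c⟩) hne
    · exact absurd rfl hne
    · exact h0 _
    · obtain ⟨i, h⟩ := h0 (u, b)
      exact ⟨i, h.symm⟩
    · fin_cases b <;> fin_cases c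
      · have : u ≠ w := by rintro rfl; exact hne rfl
        obtain ⟨x, y, h, e⟩ := hiii00 (u - w) (sub_ne_zero.2 this)
        exact gen _ _ _ _ _ _ h e
      · exact h01 u w
      · obtain ⟨i, h⟩ := h01 w u
        exact ⟨i, h.symm⟩
      · have : u ≠ w := by rintro rfl; exact hne rfl
        by_cases h3 : u - w = 3 ∨ u - w = -3
        · exact ⟨Sum.inr (), hne, u, w, rfl, rfl, h3⟩
        · push Not at h3
          obtain ⟨x, y, h, e⟩ := hiii11 (u - w) (sub_ne_zero.2 this) h3.1 h3.2
          exact gen _ _ _ _ _ _ h e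
  have hdec : IsDecomp ⊤ G := by
    refine decomp_of G (Sum.elim (fun _ => 2 * (k * 6)) (fun _ => 2 * (k * 3))) ?_ hcov ?_
    · rintro (g | g)
      · exact cc_dart _ _ _ (hG1 g)
      · exact cc_dart _ _ _ (hG2 g)
    · rw [hVc, Fintype.sum_sum_type]
      simp [ZMod.card]; ring
  have e : Fin (6 * k + 1) ≃ V := (Fintype.equivFinOfCardEq hVc).symm
  have hd : (6 * k + 1 - 1) / 2 = 3 * k := by omega
  have d : Fin ((6 * k + 1 - 1) / 2) ≃ ZMod (3 * k) :=
    Fintype.equivOfCardEq (by rw [Fintype.card_fin, ZMod.card, hd])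
  let d' := d.sumCongr (Equiv.refl Unit)
  have e1 : (6 * k + 1 - 1) / k = 6 := by
    rw [Nat.add_sub_cancel]; exact Nat.mul_div_cancel _ (by omega)
  have e2 : (6 * k + 1 - 1) / (2 * k) = 3 := by
    rw [Nat.add_sub_cancel, show 6 * k = 3 * (2 * k) by ring]
    exact Nat.mul_div_cancel _ (by omega)
  refine ⟨fun i => (G (d' i)).comap e, ?_, ?_, ?_, ?_⟩
  · intro i
    rw [e1]
    exact cc_comap _ _ _ _ (hG1 (d i))
  · intro i
    rw [e2]
    exact cc_comap _ _ _ _ (hG2 i)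
  · intro i j hij
    have : Disjoint (G (d' i)).edgeSet (G (d' j)).edgeSet := hdec.1 (d'.injective.ne hij)
    rw [Set.disjoint_left] at this ⊢
    intro z
    induction z with
    | _ u v =>
      intro h1 h2
      exact this (a := s(e u, e v)) h1 h2
  · intro z
    induction z with
    | _ u v =>
      constructor
      · intro h
        obtain ⟨i, hi⟩ := hcov (e u) (e v) (e.injective.ne h)
        refine ⟨d'.symm i, ?_⟩
        show (G (d' (d'.symm i))).Adj (e u) (e v)
        rw [Equiv.apply_symm_apply]; exact hi
      · rintro ⟨i, h⟩
        exact SimpleGraph.Adj.ne (G := (G (d' i)).comap e) h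
end
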